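/- arXiv:math/0110181 — 3 statements merged into one kernel-verified Lean document; each statement's English description precedes it below -/
import Mathlib

section
/- Let κ be a composition chosen uniformly at random from the 2^{n-1} compositions of n. Then the number of distinct part sizes |D(κ)| satisfies |D(κ)| ∼ log₂ n with probability 1 − o(1): for every ε > 0, the proportion of compositions κ of n satisfying (1−ε)·log₂ n ≤ |D(κ)| ≤ (1+ε)·log₂ n tends to 1 as n → ∞. -/
/-!
`|D(κ)|` is within `t` of `log₂ n` outside a proportion `O(2⁻ᵗ)` of the compositions `κ` of `n`,
by union bounds on both sides.

* If `∑ yʲ ≤ 1` over the admissible part sizes `j`, then splitting off the first part shows by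
  induction that at most `y⁻ⁿ` compositions of `n` have only admissible parts. When the only
  forbidden size is `m`, this applies to some `y` slightly above `1/2`, so a proportion
  `O(2ᵐ / n)` of the compositions misses `m`. Summing over `m ≤ L`, a proportion `O(2ᴸ / n)` misses
  some size in `[1, L]`; every other composition has at least `L` distinct part sizes.
* Lowering the `i`-th part by `U` injects the compositions of `n` whose `i`-th part exceeds `U` into
  the compositions of `n - U`. Hence a proportion at most `n / 2ᵁ` has some part exceeding `U`;
  every other composition has at most `U` distinct part sizes.
-/

open Filter

section Counting

open Finset

lemma sum_pow_filter_ne_le {K : Type*} [Field K] [LinearOrder K] [IsStrictOrderedRing K]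
    {y : K} (hy₀ : 0 ≤ y) (hy₁ : y < 1) {m : ℕ} (hm : m ≠ 0) (n : ℕ) :
    ∑ j ∈ Icc 1 n with j ≠ m, y ^ j ≤ y / (1 - y) - y ^ m := by
  have hsub : {j ∈ Icc 1 n | j ≠ m} ⊆ (Icc 1 (n + m)).erase m := by
    intro j
    simp only [mem_filter, mem_erase, mem_Icc]
    omega
  have hmem : m ∈ Icc 1 (n + m) := mem_Icc.2 ⟨Nat.one_le_iff_ne_zero.2 hm, Nat.le_add_left m n⟩
  calc ∑ j ∈ Icc 1 n with j ≠ m, y ^ j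
      ≤ ∑ j ∈ (Icc 1 (n + m)).erase m, y ^ j :=
        sum_le_sum_of_subset_of_nonneg hsub fun j _ _ => pow_nonneg hy₀ j
    _ = ∑ j ∈ Icc 1 (n + m), y ^ j - y ^ m := sum_erase_eq_sub hmem
    _ ≤ y / (1 - y) - y ^ m := by
        rw [← Ico_add_one_right_eq_Icc]
        simpa only [pow_one] using
          sub_le_sub_right (geom_sum_Ico_le_of_lt_one (m := 1) hy₀ hy₁) (y ^ m)

lemma card_le_card_of_blocks_eq {m n : ℕ} {s : Finset (Composition m)} {t : Finset (Composition n)}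
    (f : List ℕ → List ℕ) (h : ∀ κ ∈ s, ∃ c ∈ t, f c.blocks = κ.blocks) : #s ≤ #t := by
  classical
  calc #s = #(s.image Composition.blocks) :=
        (card_image_of_injective s fun _ _ => Composition.ext).symm
    _ ≤ #(t.image fun c => f c.blocks) := card_le_card fun l hl => by
        obtain ⟨κ, hκ, rfl⟩ := mem_image.1 hl
        exact mem_image.2 (h κ hκ)
    _ ≤ #t := card_image_le

section AdmissibleParts

variable (p : ℕ → Prop) [DecidablePred p]

lemma card_filter_head_eq_le (n j : ℕ) :
    #{κ : Composition n | (∀ i ∈ κ.blocks, p i) ∧ κ.blocks.head? = some j} ≤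
      #{κ : Composition (n - j) | ∀ i ∈ κ.blocks, p i} := by
  refine card_le_card_of_blocks_eq (List.cons j) fun κ hκ => ?_
  simp only [mem_filter, mem_univ, true_and] at hκ ⊢
  obtain ⟨hp, hhead⟩ := hκ
  obtain ⟨l, hl⟩ := List.head?_eq_some_iff.1 hhead
  have hsum : j + l.sum = n := by simpa only [hl, List.sum_cons] using κ.blocks_sum
  have hmem : ∀ {i}, i ∈ l → i ∈ κ.blocks := fun hi => hl ▸ List.mem_cons_of_mem j hi
  exact ⟨⟨l, fun hi => κ.blocks_pos (hmem hi), by omega⟩, fun i hi => hp i (hmem hi), hl.symm⟩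

lemma card_filter_forall_blocks_le_sum {n : ℕ} (hn : n ≠ 0) :
    #{κ : Composition n | ∀ i ∈ κ.blocks, p i} ≤
      ∑ j ∈ Icc 1 n with p j, #{κ : Composition (n - j) | ∀ i ∈ κ.blocks, p i} := by
  have hcover : ({κ : Composition n | ∀ i ∈ κ.blocks, p i} : Finset (Composition n)) ⊆
      {j ∈ Icc 1 n | p j}.biUnion fun j =>
        {κ : Composition n | (∀ i ∈ κ.blocks, p i) ∧ κ.blocks.head? = some j} := by
    intro κ hκ
    simp only [mem_biUnion, mem_filter, mem_Icc, mem_univ, true_and] at hκ ⊢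
    obtain ⟨j, l, hl⟩ := List.exists_cons_of_ne_nil (mt κ.blocks_eq_nil.1 hn)
    have hj : j ∈ κ.blocks := hl ▸ List.mem_cons_self
    exact ⟨j, ⟨⟨κ.blocks_pos hj, κ.blocks_le hj⟩, hκ j hj⟩, hκ, by rw [hl, List.head?_cons]⟩
  exact (card_le_card hcover).trans <| card_biUnion_le.trans <|
    sum_le_sum fun j _ => card_filter_head_eq_le p n j

lemma card_filter_forall_blocks_mul_pow_le_one {R : Type*} [CommSemiring R] [PartialOrder R]
    [IsOrderedRing R] {y : R} (hy : 0 ≤ y) (hsum : ∀ n, ∑ j ∈ Icc 1 n with p j, y ^ j ≤ 1)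
    (n : ℕ) : (#{κ : Composition n | ∀ i ∈ κ.blocks, p i} : R) * y ^ n ≤ 1 := by
  induction n using Nat.strong_induction_on with
  | _ n ih =>
    let N : ℕ → ℕ := fun k => #{κ : Composition k | ∀ i ∈ κ.blocks, p i}
    rcases eq_or_ne n 0 with rfl | hn
    · have hcard : N 0 ≤ 1 := (card_le_univ _).trans (composition_card 0).le
      simpa only [pow_zero, mul_one, Nat.cast_one] using Nat.mono_cast (α := R) hcard
    calc (N n : R) * y ^ n
        ≤ (∑ j ∈ Icc 1 n with p j, N (n - j) : ℕ) * y ^ n := by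
          gcongr
          exact card_filter_forall_blocks_le_sum p hn
      _ = ∑ j ∈ Icc 1 n with p j, N (n - j) * y ^ (n - j) * y ^ j := by
          rw [Nat.cast_sum, sum_mul]
          refine sum_congr rfl fun j hj => ?_
          rw [mul_assoc, pow_sub_mul_pow y (mem_Icc.1 (mem_filter.1 hj).1).2]
      _ ≤ ∑ j ∈ Icc 1 n with p j, y ^ j := by
          refine sum_le_sum fun j hj => mul_le_of_le_one_left (pow_nonneg hy j) (ih _ ?_)
          have := mem_Icc.1 (mem_filter.1 hj).1
          omega
      _ ≤ 1 := hsum n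

end AdmissibleParts

lemma sum_half_one_add_pow_filter_ne_le_one {m : ℕ} (hm : m ≠ 0) (n : ℕ) :
    ∑ j ∈ Icc 1 n with j ≠ m, ((1 + (1 / 2) ^ (m + 2)) / 2 : ℝ) ^ j ≤ 1 := by
  set t : ℝ := (1 / 2) ^ (m + 2) with ht
  have ht₀ : 0 < t := by positivity
  have ht₁ : t ≤ 1 / 2 := pow_le_of_le_one (by norm_num) (by norm_num) (by omega)
  have hpow : 4 * t ≤ ((1 + t) / 2) ^ m := by
    calc 4 * t = (1 / 2) ^ m := by rw [ht]; ring
      _ ≤ ((1 + t) / 2) ^ m := by gcongr; linarith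
  have hratio : (1 + t) / 2 / (1 - (1 + t) / 2) ≤ 1 + 4 * t := by
    rw [div_le_iff₀ (by linarith)]
    nlinarith
  -- Raising the ratio from `1 / 2` adds at most `4 * t` to the full series, no more than dropping
  -- the `m`-th term removes.
  have hsum := sum_pow_filter_ne_le (y := (1 + t) / 2) (by linarith) (by linarith) hm n
  linarith

lemma card_filter_notMem_blocks_mul_le {m : ℕ} (hm : m ≠ 0) (n : ℕ) :
    #{κ : Composition n | m ∉ κ.blocks} * n ≤ 2 ^ (m + 3) * 2 ^ (n - 1) := by
  rcases eq_or_ne n 0 with rfl | hn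
  · simp
  set N := #{κ : Composition n | m ∉ κ.blocks}
  set t : ℝ := (1 / 2) ^ (m + 2) with ht
  have ht₀ : 0 < t := by positivity
  have hkraft : (N : ℝ) * ((1 + t) / 2) ^ n ≤ 1 := by
    simpa only [List.forall_mem_ne'] using card_filter_forall_blocks_mul_pow_le_one (· ≠ m)
      (by positivity) (sum_half_one_add_pow_filter_ne_le_one hm) n
  have hbernoulli : n * t ≤ (1 + t) ^ n := by
    linarith [one_add_mul_le_pow (a := t) (by linarith) n]
  have hreal : (N * n : ℝ) ≤ 2 ^ (m + 3) * 2 ^ (n - 1) := by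
    calc (N * n : ℝ) = 2 ^ (m + 2) * (N * (n * t)) := by rw [ht, one_div_pow]; field_simp
      _ ≤ 2 ^ (m + 2) * (N * (1 + t) ^ n) := by gcongr
      _ = 2 ^ (m + 2) * 2 ^ n * (N * ((1 + t) / 2) ^ n) := by rw [div_pow]; field_simp
      _ ≤ 2 ^ (m + 2) * 2 ^ n := mul_le_of_le_one_right (by positivity) hkraft
      _ = 2 ^ (m + 3) * 2 ^ (n - 1) := by
        rw [← pow_add, ← pow_add]
        congr 1
        omega
  exact_mod_cast hreal

lemma card_filter_card_toFinset_lt_mul_le (L n : ℕ) :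
    #{κ : Composition n | #κ.blocks.toFinset < L} * n ≤ 2 ^ (L + 4) * 2 ^ (n - 1) := by
  have hcover : ({κ : Composition n | #κ.blocks.toFinset < L} : Finset (Composition n)) ⊆
      (Ico 1 (L + 1)).biUnion fun m => {κ : Composition n | m ∉ κ.blocks} := by
    intro κ hκ
    by_contra hκ'
    simp only [mem_biUnion, mem_filter, mem_univ, true_and, not_exists, not_and, not_not] at hκ hκ'
    have hcard := card_le_card fun m hm => List.mem_toFinset.2 (hκ' m hm)
    rw [Nat.card_Ico] at hcard
    omega
  have hgeom : ∑ m ∈ Ico 1 (L + 1), 2 ^ m ≤ 2 ^ (L + 1) :=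
    (sum_le_sum_of_subset (fun m hm => mem_range.2 (mem_Ico.1 hm).2)).trans
      (Nat.geomSum_lt le_rfl fun m hm => mem_range.1 hm).le
  calc #{κ : Composition n | #κ.blocks.toFinset < L} * n
      ≤ (∑ m ∈ Ico 1 (L + 1), #{κ : Composition n | m ∉ κ.blocks}) * n := by
        gcongr
        exact (card_le_card hcover).trans card_biUnion_le
    _ = ∑ m ∈ Ico 1 (L + 1), #{κ : Composition n | m ∉ κ.blocks} * n := sum_mul ..
    _ ≤ ∑ m ∈ Ico 1 (L + 1), 2 ^ (m + 3) * 2 ^ (n - 1) := sum_le_sum fun m hm =>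
        card_filter_notMem_blocks_mul_le (Nat.one_le_iff_ne_zero.1 (mem_Ico.1 hm).1) n
    _ = (∑ m ∈ Ico 1 (L + 1), 2 ^ m) * 2 ^ 3 * 2 ^ (n - 1) := by simp only [sum_mul, pow_add]
    _ ≤ 2 ^ (L + 1) * 2 ^ 3 * 2 ^ (n - 1) := by gcongr
    _ = 2 ^ (L + 4) * 2 ^ (n - 1) := by rw [← pow_add]

lemma card_filter_lt_getElem?_le (U n i : ℕ) :
    #{κ : Composition n | ∃ m ∈ κ.blocks[i]?, U < m} ≤ Fintype.card (Composition (n - U)) := by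
  refine card_le_card_of_blocks_eq (List.modify · i (· + U)) fun κ hκ => ?_
  obtain ⟨m, hm, hUm⟩ := (mem_filter.1 hκ).2
  obtain ⟨s, l, hs, hblocks⟩ : ∃ s l, s.length = i ∧ κ.blocks = s ++ m :: l := by
    obtain ⟨hi, hget⟩ := List.getElem?_eq_some_iff.1 hm
    refine ⟨κ.blocks.take i, κ.blocks.drop (i + 1), List.length_take_of_le hi.le, ?_⟩
    rw [← hget, List.cons_getElem_drop_succ, List.take_append_drop]
  have hpos : ∀ j ∈ s ++ m :: l, 0 < j := fun j hj => κ.blocks_pos (hblocks ▸ hj)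
  have hsum : s.sum + (m + l.sum) = n := by
    simpa only [hblocks, List.sum_append, List.sum_cons] using κ.blocks_sum
  refine ⟨⟨s ++ (m - U) :: l, fun {j} hj => ?_, ?_⟩, mem_univ _, ?_⟩
  · simp only [List.mem_append, List.mem_cons] at hj hpos
    rcases hj with hj | rfl | hj
    · exact hpos j (.inl hj)
    · exact Nat.sub_pos_of_lt hUm
    · exact hpos j (.inr (.inr hj))
  · simp only [List.sum_append, List.sum_cons]
    omega
  · simp [hblocks, ← hs, List.modify_eq_take_cons_drop, Nat.sub_add_cancel hUm.le]

lemma card_filter_exists_lt_mul_two_pow_le (U n : ℕ) :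
    #{κ : Composition n | ∃ m ∈ κ.blocks, U < m} * 2 ^ U ≤ n * 2 ^ (n - 1) := by
  rcases le_or_gt n U with hnU | hUn
  · have hempty : ({κ : Composition n | ∃ m ∈ κ.blocks, U < m} : Finset (Composition n)) = ∅ :=
      filter_eq_empty_iff.2 fun κ _ ⟨m, hm, hUm⟩ => ((κ.blocks_le hm).trans hnU).not_gt hUm
    rw [hempty, card_empty, zero_mul]
    exact Nat.zero_le _
  have hcover : ({κ : Composition n | ∃ m ∈ κ.blocks, U < m} : Finset (Composition n)) ⊆
      (range n).biUnion fun i => {κ : Composition n | ∃ m ∈ κ.blocks[i]?, U < m} := by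
    intro κ hκ
    obtain ⟨m, hm, hUm⟩ := (mem_filter.1 hκ).2
    obtain ⟨i, hi, rfl⟩ := List.mem_iff_getElem.1 hm
    exact mem_biUnion.2 ⟨i, mem_range.2 (hi.trans_le κ.length_le),
      mem_filter.2 ⟨mem_univ κ, κ.blocks[i], List.getElem?_eq_getElem hi, hUm⟩⟩
  calc #{κ : Composition n | ∃ m ∈ κ.blocks, U < m} * 2 ^ U
      ≤ (∑ i ∈ range n, #{κ : Composition n | ∃ m ∈ κ.blocks[i]?, U < m}) * 2 ^ U := by
        gcongr
        exact (card_le_card hcover).trans card_biUnion_le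
    _ ≤ (∑ _i ∈ range n, 2 ^ (n - U - 1)) * 2 ^ U := by
        gcongr with i
        exact (card_filter_lt_getElem?_le U n i).trans (composition_card _).le
    _ = n * 2 ^ (n - 1) := by
        rw [sum_const, card_range, smul_eq_mul, mul_assoc, ← pow_add]
        congr 2
        omega

lemma card_filter_lt_card_toFinset_mul_two_pow_le (U n : ℕ) :
    #{κ : Composition n | U < #κ.blocks.toFinset} * 2 ^ U ≤ n * 2 ^ (n - 1) := by
  refine (Nat.mul_le_mul_right _ (card_le_card fun κ hκ => ?_)).trans
    (card_filter_exists_lt_mul_two_pow_le U n)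
  by_contra hκ'
  simp only [mem_filter, mem_univ, true_and, not_exists, not_and, not_lt] at hκ hκ'
  have hsub : κ.blocks.toFinset ⊆ Icc 1 U := fun m hm =>
    mem_Icc.2 ⟨κ.blocks_pos (List.mem_toFinset.1 hm), hκ' m (List.mem_toFinset.1 hm)⟩
  have hcard := card_le_card hsub
  rw [Nat.card_Icc] at hcard
  omega

lemma card_filter_card_toFinset_lt_mul_le_rpow (r : ℝ) (n : ℕ) :
    (#{κ : Composition n | (#κ.blocks.toFinset : ℝ) < r} : ℝ) * n ≤
      32 * 2 ^ r * 2 ^ (n - 1) := by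
  rcases le_or_gt r 0 with hr | hr
  · have hempty : ({κ : Composition n | (#κ.blocks.toFinset : ℝ) < r} : Finset _) = ∅ :=
      filter_eq_empty_iff.2 fun κ _ => (hr.trans (Nat.cast_nonneg _)).not_gt
    rw [hempty, card_empty, Nat.cast_zero, zero_mul]
    positivity
  have hceil : (2 : ℝ) ^ ⌈r⌉₊ ≤ 2 ^ r * 2 := by
    rw [← Real.rpow_natCast, ← Real.rpow_add_one two_ne_zero]
    exact Real.rpow_le_rpow_of_exponent_le one_le_two (Nat.ceil_lt_add_one hr.le).le
  have hbound : (#{κ : Composition n | #κ.blocks.toFinset < ⌈r⌉₊} : ℝ) * n ≤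
      2 ^ (⌈r⌉₊ + 4) * 2 ^ (n - 1) := mod_cast card_filter_card_toFinset_lt_mul_le ⌈r⌉₊ n
  simp only [Nat.lt_ceil] at hbound
  calc _ ≤ (2 : ℝ) ^ (⌈r⌉₊ + 4) * 2 ^ (n - 1) := hbound
    _ ≤ 2 ^ r * 2 * 2 ^ 4 * 2 ^ (n - 1) := by rw [pow_add]; gcongr
    _ = 32 * 2 ^ r * 2 ^ (n - 1) := by ring

lemma card_filter_lt_card_toFinset_mul_rpow_le {r : ℝ} (hr : 0 ≤ r) (n : ℕ) :
    (#{κ : Composition n | r < #κ.blocks.toFinset} : ℝ) * 2 ^ r ≤ 2 * n * 2 ^ (n - 1) := by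
  have hfloor : (2 : ℝ) ^ r ≤ 2 ^ ⌊r⌋₊ * 2 := by
    rw [← Real.rpow_natCast, ← Real.rpow_add_one two_ne_zero]
    exact Real.rpow_le_rpow_of_exponent_le one_le_two (Nat.lt_floor_add_one r).le
  have hbound : (#{κ : Composition n | ⌊r⌋₊ < #κ.blocks.toFinset} : ℝ) * 2 ^ ⌊r⌋₊ ≤
      n * 2 ^ (n - 1) := mod_cast card_filter_lt_card_toFinset_mul_two_pow_le ⌊r⌋₊ n
  simp only [Nat.floor_lt hr] at hbound
  calc _ ≤ (#{κ : Composition n | r < #κ.blocks.toFinset} : ℝ) * (2 ^ ⌊r⌋₊ * 2) := by gcongr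
    _ ≤ 2 * n * 2 ^ (n - 1) := by linarith

lemma card_filter_card_toFinset_lt_logb_sub_le {n : ℕ} (hn : n ≠ 0) (t : ℝ) :
    (#{κ : Composition n | #κ.blocks.toFinset < Real.logb 2 n - t} : ℝ) ≤
      32 * (1 / 2) ^ t * 2 ^ (n - 1) := by
  have hn₀ : (0 : ℝ) < n := by positivity
  have h := card_filter_card_toFinset_lt_mul_le_rpow (Real.logb 2 n - t) n
  rw [Real.rpow_sub two_pos, Real.rpow_logb two_pos (by norm_num) hn₀] at h
  refine le_of_mul_le_mul_right (h.trans_eq ?_) hn₀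
  rw [one_div, Real.inv_rpow zero_le_two]
  ring

lemma card_filter_logb_add_lt_card_toFinset_le {n : ℕ} (hn : n ≠ 0) {t : ℝ} (ht : 0 ≤ t) :
    (#{κ : Composition n | Real.logb 2 n + t < #κ.blocks.toFinset} : ℝ) ≤
      2 * (1 / 2) ^ t * 2 ^ (n - 1) := by
  have hn₀ : (0 : ℝ) < n := by positivity
  have hlogb : 0 ≤ Real.logb 2 n :=
    Real.logb_nonneg one_lt_two (mod_cast Nat.one_le_iff_ne_zero.2 hn)
  have h := card_filter_lt_card_toFinset_mul_rpow_le (add_nonneg hlogb ht) n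
  rw [Real.rpow_add two_pos, Real.rpow_logb two_pos (by norm_num) hn₀] at h
  refine le_of_mul_le_mul_right (h.trans_eq ?_) (by positivity : 0 < n * (2 : ℝ) ^ t)
  rw [one_div, Real.inv_rpow zero_le_two]
  field_simp

lemma one_sub_le_card_filter_near_logb_div {n : ℕ} (hn : n ≠ 0) {t : ℝ} (ht : 0 ≤ t) :
    1 - 34 * (1 / 2) ^ t ≤ (#{κ : Composition n | Real.logb 2 n - t ≤ #κ.blocks.toFinset ∧
      #κ.blocks.toFinset ≤ Real.logb 2 n + t} : ℝ) / 2 ^ (n - 1) := by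
  set low : Finset (Composition n) := {κ | #κ.blocks.toFinset < Real.logb 2 n - t}
  set near : Finset (Composition n) :=
    {κ | Real.logb 2 n - t ≤ #κ.blocks.toFinset ∧ #κ.blocks.toFinset ≤ Real.logb 2 n + t}
  set high : Finset (Composition n) := {κ | Real.logb 2 n + t < #κ.blocks.toFinset}
  have hcover : (univ : Finset (Composition n)) ⊆ low ∪ near ∪ high := by
    intro κ _
    simp only [low, near, high, mem_union, mem_filter, mem_univ, true_and]
    grind
  have htotal : 2 ^ (n - 1) ≤ #low + #near + #high := by
    rw [← composition_card, ← card_univ]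
    exact (card_le_card hcover).trans <| (card_union_le _ _).trans <|
      Nat.add_le_add_right (card_union_le _ _) _
  have htotal' : (2 : ℝ) ^ (n - 1) ≤ #low + #near + #high := mod_cast htotal
  have hlow : (#low : ℝ) ≤ _ := card_filter_card_toFinset_lt_logb_sub_le hn t
  have hhigh : (#high : ℝ) ≤ _ := card_filter_logb_add_lt_card_toFinset_le hn ht
  rw [le_div_iff₀ (by positivity)]
  linarith

end Counting

lemma natCard_composition_div_le_one {n : ℕ} (P : Composition n → Prop) :
    (Nat.card {κ : Composition n // P κ} : ℝ) / 2 ^ (n - 1) ≤ 1 := by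
  rw [div_le_one (by positivity)]
  have h := Nat.card_le_card_of_injective (Subtype.val : {κ // P κ} → _) Subtype.val_injective
  rw [Nat.card_eq_fintype_card (α := Composition n), composition_card] at h
  exact_mod_cast h

theorem distinct_part_sizes_concentration_general {t : ℕ → ℝ} (ht : Tendsto t atTop atTop) :
    Tendsto
      (fun n : ℕ =>
        (Nat.card {κ : Composition n //
            Real.logb 2 n - t n ≤ (κ.blocks.toFinset.card : ℝ) ∧
            (κ.blocks.toFinset.card : ℝ) ≤ Real.logb 2 n + t n} : ℝ) / 2 ^ (n - 1))
      atTop (nhds 1) := by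
  have hlim : Tendsto (fun n => 1 - 34 * (1 / 2 : ℝ) ^ t n) atTop (nhds 1) := by
    simpa using ((tendsto_rpow_atTop_of_base_lt_one (1 / 2) (by norm_num)
      (by norm_num)).comp ht).const_mul 34 |>.const_sub 1
  refine tendsto_of_tendsto_of_tendsto_of_le_of_le' hlim tendsto_const_nhds ?_
    (.of_forall fun n => natCard_composition_div_le_one _)
  filter_upwards [eventually_ne_atTop 0, ht.eventually_ge_atTop 0] with n hn htn
  rw [Nat.card_eq_fintype_card, Fintype.card_subtype]
  exact one_sub_le_card_filter_near_logb_div hn htn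

/-- **Lemma 4.** The number of distinct part sizes of a uniformly random composition of `n`
is `(1 + o(1)) log₂ n` with probability `1 − o(1)`: for every `ε > 0`, the proportion of
compositions `κ` of `n` with `(1−ε) log₂ n ≤ |D(κ)| ≤ (1+ε) log₂ n` tends to `1`. -/
theorem distinct_part_sizes_concentration (ε : ℝ) (hε : 0 < ε) :
    Tendsto
      (fun n : ℕ =>
        (Nat.card {κ : Composition n //
            (1 - ε) * Real.logb 2 n ≤ (κ.blocks.toFinset.card : ℝ) ∧
            (κ.blocks.toFinset.card : ℝ) ≤ (1 + ε) * Real.logb 2 n} : ℝ) / 2 ^ (n - 1))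
      atTop (nhds 1) := by
  have hwindow : Tendsto (fun n : ℕ => ε * Real.logb 2 n) atTop atTop :=
    ((Real.tendsto_logb_atTop one_lt_two).comp tendsto_natCast_atTop_atTop).const_mul_atTop hε
  simpa only [sub_mul, add_mul, one_mul] using distinct_part_sizes_concentration_general hwindow
end

section
/- Fix an integer m ≥ 1. The expected number of part sizes of multiplicity m in a uniformly random composition of n, E(|M_m|) = 2^{-(n-1)} Σ_{κ composition of n} |M_m(κ)|, satisfies E(|M_m|) = (1 + o(1)) · (n^m/m!) · Σ_{k=1}^∞ 2^{-km} exp(−n/2^k) as n → ∞. -/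
open Filter

/-!
Let `X_k` be the number of parts equal to `k` in a random composition of `n`. The expectation is
`∑ k, P(X_k = m)`, while the asserted main term is `∑ k, P(Poisson(n / 2 ^ (k + 1)) = m)`, both over
`k ≥ 0` with `X_0 = 0`.

Marking `r` parts of size `k` leaves `r + 1` gaps filled by arbitrary compositions, which gives the
`r`-th binomial moment of `X_k` exactly, and it is asymptotic to that of a Poisson variable. For `k`
at bounded distance from `log₂ n` the method of moments thus makes each difference
`P(X_k = m) - P(Poisson(n / 2 ^ (k + 1)) = m)` tend to `0`. For large `k` the difference is bounded
by a multiple of the rate (Markov), for small `k` by a multiple of its inverse (Chebyshev), so it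
decays geometrically in `|k - log₂ n|` and the sum of the differences tends to `0` by dominated
convergence. The main term itself stays bounded below, as some rate lies in `[1, 2]`.
-/

open Finset MeasureTheory ProbabilityTheory
open scoped BigOperators Nat NNReal Topology

section GapCoeff

/-- The coefficient of `x ^ N` in `(1 + 1 / (1 - x)) ^ (r + 1)`. Since `(1 - x) / (1 - 2 * x)` is
the generating function of compositions, the empty one included, this is `2 ^ (r + 1) / 2 ^ N`
times the number of ways to fill the `r + 1` gaps around `r` marked parts with compositions of
total size `N`. -/
def gapCoeff : ℕ → ℕ → ℕ
  | 0, N => if N = 0 then 2 else 1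
  | r + 1, N => gapCoeff r N + ∑ i ∈ range (N + 1), gapCoeff r i

lemma choose_le_gapCoeff (r N : ℕ) : (N + r).choose r ≤ gapCoeff r N := by
  induction r generalizing N with
  | zero => simp only [gapCoeff, Nat.choose_zero_right]; split_ifs <;> norm_num
  | succ r ih =>
    calc (N + (r + 1)).choose (r + 1) = ∑ i ∈ range (N + 1), (i + r).choose r :=
        (Nat.sum_range_add_choose N r).symm
      _ ≤ ∑ i ∈ range (N + 1), gapCoeff r i := sum_le_sum fun i _ => ih i
      _ ≤ gapCoeff (r + 1) N := Nat.le_add_left _ _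

lemma sum_range_choose_add_le (a r N : ℕ) :
    ∑ i ∈ range N, (i + a).choose r ≤ (N + a).choose (r + 1) := by
  induction N with
  | zero => simp
  | succ N ih =>
    rw [sum_range_succ, Nat.add_right_comm N 1 a, Nat.choose_succ_succ' (N + a) r]
    lia

lemma sum_range_gapCoeff_zero (N : ℕ) : ∑ i ∈ range (N + 1), gapCoeff 0 i = N + 2 := by
  induction N with
  | zero => simp [gapCoeff]
  | succ N ih => rw [sum_range_succ, ih]; simp [gapCoeff]

lemma gapCoeff_le_choose {r : ℕ} (hr : 0 < r) (N : ℕ) :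
    gapCoeff r N ≤ (N + (2 * r + 2)).choose r := by
  induction r, hr using Nat.le_induction generalizing N with
  | base =>
    rw [gapCoeff, sum_range_gapCoeff_zero, Nat.choose_one_right, gapCoeff]
    split_ifs <;> lia
  | succ r _ ih =>
    set M := N + (2 * r + 2)
    calc gapCoeff (r + 1) N
        ≤ M.choose r + ∑ i ∈ range (N + 1), (i + (2 * r + 2)).choose r :=
          add_le_add (ih N) (sum_le_sum fun i _ => ih i)
      _ ≤ (M + 1).choose r + (M + 1).choose (r + 1) := by
          gcongr
          · exact Nat.le_succ M
          · exact (sum_range_choose_add_le _ _ _).trans_eq (by rw [Nat.add_right_comm])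
      _ = (N + (2 * (r + 1) + 2)).choose (r + 1) := (Nat.choose_succ_succ' (M + 1) r).symm

end GapCoeff

section Compositions

lemma sum_composition_succ {M : Type*} [AddCommMonoid M] (n : ℕ) (F : List ℕ → M) :
    ∑ κ : Composition (n + 1), F κ.blocks =
      ∑ p ∈ antidiagonal n, ∑ κ : Composition p.2, F ((p.1 + 1) :: κ.blocks) := by
  rw [sum_sigma']
  symm
  refine sum_bij (fun a ha => ⟨(a.1.1 + 1) :: a.2.blocks, ?_, ?_⟩) (fun _ _ => mem_univ _)
    ?inj ?surj fun _ _ => rfl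
  · exact fun hi => (List.mem_cons.1 hi).elim (fun h => by lia) a.2.blocks_pos
  · rw [List.sum_cons, a.2.blocks_sum]
    have := mem_antidiagonal.1 (mem_sigma.1 ha).1
    lia
  case inj =>
    rintro ⟨⟨i, j⟩, κ⟩ h ⟨⟨i', j'⟩, κ'⟩ h' heq
    obtain ⟨hi, hκ⟩ := List.cons.inj (congrArg Composition.blocks heq)
    have hij : i + j = n := mem_antidiagonal.1 (mem_sigma.1 h).1
    have hij' : i' + j' = n := mem_antidiagonal.1 (mem_sigma.1 h').1
    obtain rfl : i = i' := Nat.succ_injective hi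
    obtain rfl : j = j' := by lia
    exact congrArg (Sigma.mk (i, j)) (Composition.ext hκ)
  case surj =>
    rintro ⟨_ | ⟨b, l⟩, hpos, hsum⟩ -
    · simp at hsum
    · have hb : 0 < b := hpos List.mem_cons_self
      rw [List.sum_cons] at hsum
      refine ⟨⟨(b - 1, l.sum), ⟨l, fun h => hpos (List.mem_cons_of_mem b h), rfl⟩⟩, ?_, ?_⟩
      · simp only [mem_sigma, HasAntidiagonal.mem_antidiagonal, mem_univ, and_true]
        lia
      · exact Composition.ext (congrArg (· :: l) (Nat.sub_add_cancel hb))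

lemma count_blocks_mul_le {n : ℕ} (κ : Composition n) (k : ℕ) : κ.blocks.count k * k ≤ n := by
  have h := (List.replicate_sublist_iff.2 (le_refl (κ.blocks.count k))).sum_le_sum
    fun _ _ => Nat.zero_le _
  simpa using h

/-- The number of compositions of `n` with `r` marked parts of size `k`. -/
def markedCount (k r n : ℕ) : ℕ := ∑ κ : Composition n, (κ.blocks.count k).choose r

lemma markedCount_zero (k n : ℕ) : markedCount k 0 n = 2 ^ (n - 1) := by
  simp [markedCount, composition_card]

lemma markedCount_eq_zero {k r n : ℕ} (h : n < k * r) : markedCount k r n = 0 := by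
  refine sum_eq_zero fun κ _ => Nat.choose_eq_zero_of_lt ?_
  have := count_blocks_mul_le κ k
  exact lt_of_mul_lt_mul_left (by lia : k * κ.blocks.count k < k * r) (Nat.zero_le k)

lemma sum_choose_count_cons (k r i j : ℕ) :
    ∑ κ : Composition j, ((i :: κ.blocks).count k).choose (r + 1) =
      markedCount k (r + 1) j + if i = k then markedCount k r j else 0 := by
  split_ifs with h
  · subst h
    simp only [markedCount, List.count_cons_self, Nat.choose_succ_succ', sum_add_distrib]
    exact add_comm _ _
  · simp only [markedCount, List.count_cons_of_ne h, add_zero]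

/-- Decompose according to the first part: if it equals `k`, it is either unmarked or marked. -/
lemma markedCount_add {k : ℕ} (hk : 0 < k) (r n : ℕ) :
    markedCount k (r + 1) (n + k) =
      ∑ j ∈ range (n + k), markedCount k (r + 1) j + markedCount k r n := by
  obtain ⟨q, rfl⟩ := Nat.exists_eq_add_of_le' hk
  have hfirst := sum_composition_succ (n + q) fun l => (l.count (q + 1)).choose (r + 1)
  simp only [sum_choose_count_cons, sum_add_distrib] at hfirst
  rw [← add_assoc, markedCount, hfirst]
  congr 1
  · exact Nat.sum_antidiagonal_eq_sum_range_succ_mk _ _ |>.trans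
      (sum_range_reflect (markedCount (q + 1) (r + 1)) (n + q + 1))
  · rw [sum_eq_single_of_mem (q, n) (mem_antidiagonal.2 (add_comm q n))]
    · simp
    · rintro ⟨i, j⟩ hij hne
      have := mem_antidiagonal.1 hij
      exact if_neg fun hi => hne (Prod.ext (by lia) (by lia))

lemma markedCount_eq_gapCoeff {k : ℕ} (hk : 0 < k) (r N : ℕ) :
    2 ^ (r + 1) * markedCount k r (N + k * r) = 2 ^ N * gapCoeff r N := by
  induction r generalizing N with
  | zero => cases N <;> simp [markedCount_zero, gapCoeff, pow_succ']
  | succ r ih =>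
    have hrec (N : ℕ) := markedCount_add hk r (N + k * r)
    simp only [add_assoc, ← mul_add_one k r] at hrec
    induction N with
    | zero =>
      have hsmall : ∑ j ∈ range (0 + k * (r + 1)), markedCount k (r + 1) j = 0 :=
        sum_eq_zero fun j hj => markedCount_eq_zero (by simpa using hj)
      have h0 := ih 0
      rw [hrec, hsmall, zero_add, pow_succ', mul_assoc, h0]
      simp [gapCoeff, two_mul]
    | succ N ihN =>
      have hdouble : markedCount k (r + 1) (N + 1 + k * (r + 1)) + markedCount k r (N + k * r) =
          2 * markedCount k (r + 1) (N + k * (r + 1)) + markedCount k r (N + 1 + k * r) := by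
        rw [hrec (N + 1), Nat.add_right_comm N 1 (k * (r + 1)), sum_range_succ, hrec N]
        ring
      have hN := ih N
      have hN1 := ih (N + 1)
      simp only [gapCoeff, sum_range_succ _ (N + 1), pow_succ] at *
      linear_combination 4 * 2 ^ r * hdouble + 2 * ihN + 2 * hN1 + 2 * hN.symm

end Compositions

section BinomialMoments

lemma hasSum_alternating_choose_iff {a : ℕ → ℝ} {m : ℕ} {s : ℝ} :
    HasSum (fun r => (-1) ^ (r + m) * r.choose m * a r) s ↔
      HasSum (fun r => (-1) ^ r * (r + m).choose m * a (r + m)) s := by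
  rw [← (add_left_injective m).hasSum_iff]
  · refine iff_of_eq (congrArg (HasSum · s) (funext fun r => ?_))
    rw [Function.comp_apply, add_assoc, pow_add _ r, Even.neg_one_pow ⟨m, rfl⟩, mul_one]
  · intro r hr
    have hrm : r < m := by
      by_contra! h
      exact hr ⟨r - m, Nat.sub_add_cancel h⟩
    simp [Nat.choose_eq_zero_of_lt hrm]

lemma hasSum_alternating_choose_mul_choose (x m : ℕ) :
    HasSum (fun r : ℕ => (-1 : ℝ) ^ (r + m) * r.choose m * x.choose r)
      (if x = m then 1 else 0) := by
  rw [hasSum_alternating_choose_iff]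
  have hterm (r : ℕ) : (-1 : ℝ) ^ r * (r + m).choose m * x.choose (r + m) =
      x.choose m * ((-1) ^ r * (x - m).choose r) := by
    have h := Nat.choose_mul (n := x) (Nat.le_add_left m r)
    rw [Nat.add_sub_cancel] at h
    have h' : (x.choose (r + m) : ℝ) * (r + m).choose m = x.choose m * (x - m).choose r :=
      mod_cast h
    linear_combination (-1) ^ r * h'
  have hsum : HasSum (fun r : ℕ => (-1 : ℝ) ^ r * (x - m).choose r)
      (if x - m = 0 then 1 else 0) := by
    have h := Int.alternating_sum_range_choose (n := x - m)
    rw [← Int.cast_inj (α := ℝ)] at h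
    push_cast at h
    rw [← h]
    exact hasSum_sum_of_ne_finset_zero fun r hr => by
      rw [Nat.choose_eq_zero_of_lt (by simpa using hr), Nat.cast_zero, mul_zero]
  have hvalue : (if x = m then 1 else 0 : ℝ) = x.choose m * if x - m = 0 then 1 else 0 := by
    rcases lt_trichotomy x m with h | rfl | h
    · simp [h.ne, Nat.choose_eq_zero_of_lt h]
    · simp
    · simp [h.ne', Nat.sub_ne_zero_of_lt h]
  simpa only [hterm, hvalue] using hsum.mul_left (x.choose m : ℝ)

lemma hasSum_alternating_choose_poisson (x : ℝ≥0) (m : ℕ) :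
    HasSum (fun r : ℕ => (-1 : ℝ) ^ (r + m) * r.choose m * ((x : ℝ) ^ r / r !))
      ((poissonMeasure x).real {m}) := by
  rw [hasSum_alternating_choose_iff, poissonMeasure_real_singleton]
  have hterm (r : ℕ) : (-1 : ℝ) ^ r * (r + m).choose m * ((x : ℝ) ^ (r + m) / (r + m)!) =
      (-x : ℝ) ^ r / r ! * (x ^ m / m !) := by
    rw [← Nat.add_choose_mul_factorial_mul_factorial, ← Nat.choose_symm_add, neg_pow (x : ℝ) r,
      pow_add]
    have : ((r + m).choose r : ℝ) ≠ 0 :=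
      mod_cast (Nat.choose_pos (Nat.le_add_right r m)).ne'
    push_cast
    field_simp
  have h := (NormedSpace.expSeries_div_hasSum_exp (𝔸 := ℝ) (-x)).mul_right ((x : ℝ) ^ m / m !)
  rw [← Real.exp_eq_exp_ℝ, ← mul_div_assoc] at h
  simpa only [hterm] using h

variable {Ω : Type*} [Fintype Ω] (X : Ω → ℕ)

/-- The `r`-th binomial moment `𝔼 (X choose r)` of `X` under the uniform distribution on `Ω`, that
is, the `r`-th factorial moment divided by `r !`. -/
noncomputable def binomialMoment (r : ℕ) : ℝ := 𝔼 ω, ((X ω).choose r : ℝ)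

/-- The probability of `X = m` under the uniform distribution on `Ω`. -/
noncomputable def probEq (m : ℕ) : ℝ := 𝔼 ω, if X ω = m then 1 else 0

lemma binomialMoment_nonneg (r : ℕ) : 0 ≤ binomialMoment X r :=
  expect_nonneg fun _ _ => Nat.cast_nonneg _

lemma probEq_nonneg (m : ℕ) : 0 ≤ probEq X m :=
  expect_nonneg fun _ _ => by split_ifs <;> norm_num

lemma probEq_le_one [Nonempty Ω] (m : ℕ) : probEq X m ≤ 1 :=
  expect_le univ_nonempty fun _ _ => by split_ifs <;> norm_num

lemma probEq_le_binomialMoment_one {m : ℕ} (hm : m ≠ 0) : probEq X m ≤ binomialMoment X 1 := by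
  refine expect_le_expect fun ω _ => ?_
  split_ifs with h
  · rw [Nat.choose_one_right, Nat.one_le_cast, h]
    exact Nat.pos_of_ne_zero hm
  · exact Nat.cast_nonneg _

lemma hasSum_probEq (m : ℕ) :
    HasSum (fun r : ℕ => (-1 : ℝ) ^ (r + m) * r.choose m * binomialMoment X r) (probEq X m) := by
  simp only [probEq, binomialMoment, Fintype.expect_eq_sum_div_card, ← mul_div_assoc, mul_sum]
  exact (hasSum_sum fun ω _ => hasSum_alternating_choose_mul_choose (X ω) m).div_const _

lemma expect_sub_binomialMoment_one_sq [Nonempty Ω] :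
    𝔼 ω, ((X ω : ℝ) - binomialMoment X 1) ^ 2 =
      2 * binomialMoment X 2 + binomialMoment X 1 - binomialMoment X 1 ^ 2 := by
  set μ := binomialMoment X 1 with hμ
  have hpoint (ω : Ω) : ((X ω : ℝ) - μ) ^ 2 =
      2 * (X ω).choose 2 + (1 - 2 * μ) * (X ω).choose 1 + μ ^ 2 := by
    rw [Nat.cast_choose_two, Nat.choose_one_right]
    ring
  simp only [hpoint, expect_add_distrib, ← mul_expect, Fintype.expect_const]
  rw [← binomialMoment, ← binomialMoment, ← hμ]
  ring

lemma probEq_mul_sq_le [Nonempty Ω] (m : ℕ) :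
    probEq X m * (m - binomialMoment X 1) ^ 2 ≤
      2 * binomialMoment X 2 + binomialMoment X 1 - binomialMoment X 1 ^ 2 := by
  rw [← expect_sub_binomialMoment_one_sq, probEq, expect_mul]
  refine expect_le_expect fun ω _ => ?_
  split_ifs with h
  · rw [h, one_mul]
  · rw [zero_mul]
    exact sq_nonneg _

end BinomialMoments

/- The method of moments with a varying rate: by inclusion-exclusion both probabilities are the same
alternating series in the binomial moments. -/
theorem tendsto_probEq_sub_poisson {ι : Type*} {l : Filter ι} {Ω : ι → Type*}
    [∀ i, Fintype (Ω i)] (X : ∀ i, Ω i → ℕ) (x : ι → ℝ≥0) (C : ℝ)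
    (hX : ∀ᶠ i in l, ∀ r, binomialMoment (X i) r ≤ C ^ r / r !) (hx : ∀ᶠ i in l, (x i : ℝ) ≤ C)
    (hlim : ∀ r, Tendsto (fun i => binomialMoment (X i) r - (x i : ℝ) ^ r / r !) l (𝓝 0)) (m : ℕ) :
    Tendsto (fun i => probEq (X i) m - (poissonMeasure (x i)).real {m}) l (𝓝 0) := by
  have hseries (i : ι) : ∑' r : ℕ, (-1 : ℝ) ^ (r + m) * r.choose m *
      (binomialMoment (X i) r - (x i : ℝ) ^ r / r !) =
        probEq (X i) m - (poissonMeasure (x i)).real {m} := by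
    simp only [mul_sub]
    exact ((hasSum_probEq (X i) m).sub (hasSum_alternating_choose_poisson (x i) m)).tsum_eq
  simp only [← hseries]
  rw [← tsum_zero (β := ℕ) (α := ℝ)]
  refine tendsto_tsum_of_dominated_convergence (Real.summable_pow_div_factorial (2 * C))
    (fun r => by simpa using (hlim r).const_mul ((-1 : ℝ) ^ (r + m) * r.choose m)) ?_
  filter_upwards [hX, hx] with i hXi hxi r
  have hdiff : |binomialMoment (X i) r - (x i : ℝ) ^ r / r !| ≤ C ^ r / r ! :=
    abs_sub_le_of_nonneg_of_le (binomialMoment_nonneg _ r) (hXi r) (by positivity) (by gcongr)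
  have hchoose : (r.choose m : ℝ) ≤ 2 ^ r := mod_cast Nat.choose_le_two_pow r m
  rw [norm_mul, norm_mul, norm_pow, norm_neg, norm_one, one_pow, one_mul, Real.norm_natCast,
    Real.norm_eq_abs, mul_pow, mul_div_assoc]
  gcongr

section Poisson

variable (x : ℝ≥0) (m : ℕ)

lemma poissonMeasure_real_singleton_succ :
    (m + 1) * (poissonMeasure x).real {m + 1} = x * (poissonMeasure x).real {m} := by
  simp only [poissonMeasure_real_singleton, Nat.factorial_succ, Nat.cast_mul, Nat.cast_succ]
  field_simp
  ring

lemma mul_poissonMeasure_real_singleton_le : x * (poissonMeasure x).real {m} ≤ m + 1 := by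
  rw [← poissonMeasure_real_singleton_succ]
  exact mul_le_of_le_one_right (by positivity) measureReal_le_one

lemma poissonMeasure_real_singleton_le {m : ℕ} (hm : m ≠ 0) :
    (poissonMeasure x).real {m} ≤ x := by
  obtain ⟨m, rfl⟩ := Nat.exists_eq_succ_of_ne_zero hm
  calc (poissonMeasure x).real {m + 1} ≤ (m + 1) * (poissonMeasure x).real {m + 1} :=
        le_mul_of_one_le_left measureReal_nonneg (by simp)
    _ = x * (poissonMeasure x).real {m} := poissonMeasure_real_singleton_succ x m
    _ ≤ x := mul_le_of_le_one_right x.2 measureReal_le_one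

end Poisson

/- Dominated convergence after re-indexing by `j = k - L n`. -/
theorem tendsto_tsum_of_natAbs_sub_bound {d : ℕ → ℕ → ℝ} {L : ℕ → ℕ} {C : ℝ}
    (hL : Tendsto L atTop atTop)
    (hlim : ∀ K : ℕ → ℕ, ∀ j : ℤ, (∀ᶠ n in atTop, (K n : ℤ) = L n + j) →
      Tendsto (fun n => d n (K n)) atTop (𝓝 0))
    (hbound : ∀ᶠ n in atTop, ∀ k, |d n k| ≤ C * (1 / 2) ^ ((k : ℤ) - L n).natAbs) :
    Tendsto (fun n => ∑' k, d n k) atTop (𝓝 0) := by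
  have hsummable : Summable fun j : ℤ => C * (1 / 2 : ℝ) ^ j.natAbs := by
    refine Summable.mul_left C (.of_nat_of_neg ?_ ?_) <;> simpa using summable_geometric_two
  set shift : ℕ → ℕ → ℤ := fun n k => (k : ℤ) - L n
  have hinj (n : ℕ) : Function.Injective (shift n) := fun a b h => by simpa [shift] using h
  simp only [← fun n => tsum_extend_zero (hinj n) (d n)]
  rw [← tsum_zero (β := ℤ) (α := ℝ)]
  refine tendsto_tsum_of_dominated_convergence hsummable (fun j => ?_) ?_
  · have hK : ∀ᶠ n in atTop, (((L n + j).toNat : ℕ) : ℤ) = L n + j := by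
      filter_upwards [hL.eventually_ge_atTop j.natAbs] with n hn
      lia
    refine (hlim _ j hK).congr' ?_
    filter_upwards [hK] with n hn
    have hj : j = shift n (L n + j).toNat := by simp only [shift]; lia
    conv_rhs => rw [hj, (hinj n).extend_apply]
  · filter_upwards [hbound] with n hn j
    have hC : 0 ≤ C := by simpa using (abs_nonneg _).trans (hn (L n))
    by_cases hj : ∃ k, shift n k = j
    · obtain ⟨k, rfl⟩ := hj
      rw [(hinj n).extend_apply]
      exact hn k
    · rw [Function.extend_apply' _ _ _ hj, Pi.zero_apply, norm_zero]
      positivity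

section PartCount

/-- The multiplicity of the part size `k`, as a random variable on the compositions of `n`. -/
def partCount (n k : ℕ) (κ : Composition n) : ℕ := κ.blocks.count k

/-- The asymptotic mean `n / 2 ^ (k + 1)` of `partCount n k`, used as a Poisson rate. -/
noncomputable def partMean (n k : ℕ) : ℝ≥0 := n / 2 ^ (k + 1)

lemma coe_partMean (n k : ℕ) : (partMean n k : ℝ) = n / 2 ^ (k + 1) := by
  simp [partMean]

lemma binomialMoment_partCount (n k r : ℕ) :
    binomialMoment (partCount n k) r = markedCount k r n / 2 ^ (n - 1) := by
  simp [binomialMoment, partCount, markedCount, Fintype.expect_eq_sum_div_card, composition_card]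

lemma binomialMoment_partCount_eq_zero {n k r : ℕ} (h : n < k * r) :
    binomialMoment (partCount n k) r = 0 := by
  rw [binomialMoment_partCount, markedCount_eq_zero h, Nat.cast_zero, zero_div]

lemma binomialMoment_partCount_eq_gapCoeff {k r N : ℕ} (hk : 0 < k) (h : N + k * r ≠ 0) :
    binomialMoment (partCount (N + k * r) k) r = gapCoeff r N / (2 ^ (k + 1)) ^ r := by
  have hcount : (2 : ℝ) ^ (r + 1) * markedCount k r (N + k * r) = 2 ^ N * gapCoeff r N :=
    mod_cast markedCount_eq_gapCoeff hk r N
  have hpow : (2 : ℝ) ^ (N + k * r - 1) * 2 = 2 ^ N * (2 ^ k) ^ r := by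
    rw [pow_sub_one_mul h, pow_add, pow_mul]
  rw [binomialMoment_partCount, div_eq_div_iff (by positivity) (by positivity), pow_succ, mul_pow]
  refine mul_right_cancel₀ (two_ne_zero (α := ℝ)) ?_
  linear_combination (2 ^ k) ^ r * hcount - gapCoeff r N * hpow

/- The truncated subtraction is deliberate: it makes this bound and the next one valid also for
`n < k * r`, where the moment vanishes. -/
lemma le_binomialMoment_partCount {n k : ℕ} (hn : n ≠ 0) (hk : 0 < k) (r : ℕ) :
    ((n + 1 - k * r : ℕ) / 2 ^ (k + 1) : ℝ) ^ r / r ! ≤ binomialMoment (partCount n k) r := by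
  obtain h | h := lt_or_ge n (k * r)
  · have hr : r ≠ 0 := fun hr => by simp [hr] at h
    rw [Nat.sub_eq_zero_of_le h, Nat.cast_zero, zero_div, zero_pow hr, zero_div]
    exact binomialMoment_nonneg _ _
  · obtain ⟨N, rfl⟩ := Nat.exists_eq_add_of_le' h
    rw [binomialMoment_partCount_eq_gapCoeff hk hn, div_pow, div_right_comm]
    gcongr
    calc ((N + k * r + 1 - k * r : ℕ) : ℝ) ^ r / r ! = (N + r + 1 - r : ℕ) ^ r / r ! := by
          congr 3
          lia
      _ ≤ (N + r).choose r := Nat.pow_le_choose r _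
      _ ≤ gapCoeff r N := mod_cast choose_le_gapCoeff r N

lemma binomialMoment_partCount_le {n k : ℕ} (hn : n ≠ 0) (hk : 0 < k) (r : ℕ) :
    binomialMoment (partCount n k) r ≤
      ((n + (2 * r + 2) - k * r : ℕ) / 2 ^ (k + 1) : ℝ) ^ r / r ! := by
  obtain h | h := lt_or_ge n (k * r)
  · rw [binomialMoment_partCount_eq_zero h]
    positivity
  obtain rfl | hr := r.eq_zero_or_pos
  · simp [binomialMoment_partCount, markedCount_zero]
  · obtain ⟨N, rfl⟩ := Nat.exists_eq_add_of_le' h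
    rw [binomialMoment_partCount_eq_gapCoeff hk hn, div_pow, div_right_comm]
    gcongr
    calc (gapCoeff r N : ℝ) ≤ (N + (2 * r + 2)).choose r := mod_cast gapCoeff_le_choose hr N
      _ ≤ (N + (2 * r + 2) : ℕ) ^ r / r ! := Nat.choose_le_pow_div r _
      _ = (N + k * r + (2 * r + 2) - k * r : ℕ) ^ r / r ! := by
          congr 3
          lia

end PartCount

section PointwiseLimit

lemma isLittleO_pow_sub_pow {ι : Type*} {l : Filter ι} {u v : ι → ℝ}
    (huv : (fun i => u i - v i) =o[l] fun _ => (1 : ℝ)) (hv : v =O[l] fun _ => (1 : ℝ)) (r : ℕ) :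
    (fun i => u i ^ r - v i ^ r) =o[l] fun _ => (1 : ℝ) := by
  induction r with
  | zero => simp [tendsto_const_nhds]
  | succ r ih =>
    have hu : u =O[l] fun _ => (1 : ℝ) := by simpa using huv.isBigO.add hv
    have hvr : (fun i => v i ^ r) =O[l] fun _ => (1 : ℝ) := by simpa using hv.pow r
    have hstep := (ih.mul_isBigO hu).add (hvr.mul_isLittleO huv)
    simp only [mul_one] at hstep
    exact hstep.congr_left fun i => by ring

variable {K : ℕ → ℕ} (hK : Tendsto K atTop atTop)
include hK

lemma tendsto_sub_partMean (c s : ℕ) :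
    Tendsto (fun n => ((n + c - K n * s : ℕ) / 2 ^ (K n + 1) : ℝ) - partMean n (K n)) atTop
      (𝓝 0) := by
  have hlinear : Tendsto (fun k : ℕ => (s * k + c) / (2 : ℝ) ^ (k + 1)) atTop (𝓝 0) := by
    have h1 := tendsto_pow_const_div_const_pow_of_one_lt 1 (one_lt_two (α := ℝ))
    have h0 := tendsto_pow_const_div_const_pow_of_one_lt 0 (one_lt_two (α := ℝ))
    have h := (h1.const_mul (s / 2 : ℝ)).add (h0.const_mul (c / 2 : ℝ))
    simp only [mul_zero, add_zero] at h
    refine h.congr fun k => ?_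
    field_simp
    ring
  refine squeeze_zero_norm (fun n => ?_) (hlinear.comp hK)
  rw [coe_partMean, ← sub_div, norm_div, Real.norm_of_nonneg (by positivity : (0 : ℝ) ≤ 2 ^ _),
    Function.comp_apply, Real.norm_eq_abs]
  gcongr
  have hlower : (n : ℝ) + c ≤ (n + c - K n * s : ℕ) + s * K n := by
    rw [mul_comm (s : ℝ)]
    exact mod_cast le_tsub_add
  have hupper : ((n + c - K n * s : ℕ) : ℝ) ≤ n + c := mod_cast Nat.sub_le _ _
  rw [abs_le]
  constructor <;> nlinarith

variable {B : ℝ} (hB : ∀ᶠ n in atTop, (partMean n (K n) : ℝ) ≤ B)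
include hB

lemma tendsto_binomialMoment_partCount_sub (r : ℕ) :
    Tendsto (fun n => binomialMoment (partCount n (K n)) r - (partMean n (K n) : ℝ) ^ r / r !)
      atTop (𝓝 0) := by
  have hbdd : (fun n => (partMean n (K n) : ℝ)) =O[atTop] fun _ => (1 : ℝ) :=
    .of_bound B <| hB.mono fun n hn => by simpa using hn
  have hpow (c : ℕ) : Tendsto (fun n => ((n + c - K n * r : ℕ) / 2 ^ (K n + 1) : ℝ) ^ r / (r !) -
      (partMean n (K n) : ℝ) ^ r / r !) atTop (𝓝 0) := by
    have h := isLittleO_pow_sub_pow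
      ((Asymptotics.isLittleO_one_iff ℝ).2 (tendsto_sub_partMean hK c r)) hbdd r
    have h := (Asymptotics.isLittleO_one_iff ℝ).1 h
    simpa only [zero_div, sub_div] using h.div_const (r ! : ℝ)
  refine tendsto_of_tendsto_of_tendsto_of_le_of_le' (hpow 1) (hpow (2 * r + 2)) ?_ ?_ <;>
    filter_upwards [eventually_ne_atTop 0, hK.eventually_gt_atTop 0] with n hn hk
  · exact sub_le_sub_right (le_binomialMoment_partCount hn hk r) _
  · exact sub_le_sub_right (binomialMoment_partCount_le hn hk r) _

lemma tendsto_probEq_partCount_sub (m : ℕ) :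
    Tendsto (fun n => probEq (partCount n (K n)) m - (poissonMeasure (partMean n (K n))).real {m})
      atTop (𝓝 0) := by
  refine tendsto_probEq_sub_poisson _ _ (B + 1) ?_ (hB.mono fun n hn => by linarith)
    (tendsto_binomialMoment_partCount_sub hK hB) m
  filter_upwards [hB, eventually_ne_atTop 0, hK.eventually_ge_atTop 2] with n hBn hn hk r
  refine (binomialMoment_partCount_le hn (by lia) r).trans ?_
  gcongr
  have hshift : n + (2 * r + 2) - K n * r ≤ n + 2 := by
    have := Nat.mul_le_mul_right r hk
    lia
  calc ((n + (2 * r + 2) - K n * r : ℕ) / 2 ^ (K n + 1) : ℝ)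
      ≤ (n + 2 : ℕ) / 2 ^ (K n + 1) := by gcongr
    _ = partMean n (K n) + (1 / 2) ^ K n := by
        rw [coe_partMean, pow_succ, one_div_pow]
        push_cast
        field_simp
    _ ≤ B + 1 := add_le_add hBn (pow_le_one₀ (by norm_num) (by norm_num))

end PointwiseLimit

section Domination

lemma probEq_partCount_zero {m : ℕ} (hm : m ≠ 0) (n : ℕ) : probEq (partCount n 0) m = 0 := by
  refine expect_eq_zero fun κ _ => if_neg fun h => hm ?_
  rw [← h, partCount, List.count_eq_zero]
  exact fun h0 => (κ.blocks_pos h0).false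

lemma sub_one_le_binomialMoment_partCount_one {n k : ℕ} (hn : n ≠ 0) (hk : 0 < k) :
    partMean n k - 1 ≤ binomialMoment (partCount n k) 1 := by
  refine le_trans ?_ (le_binomialMoment_partCount hn hk 1)
  have hsub : (n : ℝ) + 1 ≤ (n + 1 - k * 1 : ℕ) + k := mod_cast (by lia)
  have hpow : (k : ℝ) + 1 ≤ 2 ^ (k + 1) := mod_cast (k + 1).lt_two_pow_self.le
  rw [pow_one, Nat.factorial_one, Nat.cast_one, div_one, coe_partMean, sub_le_iff_le_add,
    div_add_one (by positivity)]
  gcongr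
  linarith

lemma binomialMoment_partCount_one_le {n k : ℕ} (hn : n ≠ 0) (hk : 0 < k) :
    binomialMoment (partCount n k) 1 ≤ (n + 3 : ℕ) / 2 ^ (k + 1) := by
  refine (binomialMoment_partCount_le hn hk 1).trans ?_
  rw [pow_one, Nat.factorial_one, Nat.cast_one, div_one]
  gcongr
  lia

lemma two_mul_binomialMoment_partCount_two_le {n k : ℕ} (hn : n ≠ 0) (hk : 0 < k) :
    2 * binomialMoment (partCount n k) 2 ≤ (partMean n k + 1) ^ 2 := by
  calc 2 * binomialMoment (partCount n k) 2
      ≤ ((n + (2 * 2 + 2) - k * 2 : ℕ) / 2 ^ (k + 1) : ℝ) ^ 2 := by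
        have h := binomialMoment_partCount_le hn hk 2
        rw [Nat.factorial_two, Nat.cast_two] at h
        linarith
    _ ≤ ((n + 4 : ℕ) / 2 ^ (k + 1) : ℝ) ^ 2 := by
        gcongr
        lia
    _ ≤ (partMean n k + 1) ^ 2 := by
        have hpow : (2 : ℝ) ^ 2 ≤ 2 ^ (k + 1) := pow_le_pow_right₀ one_le_two (by lia)
        rw [coe_partMean, div_add_one (by positivity)]
        gcongr
        push_cast
        linarith

variable {n m : ℕ} (hn : n ≠ 0) (hm : m ≠ 0) (k : ℕ)
include hn hm

lemma probEq_partCount_le : probEq (partCount n k) m ≤ 4 * partMean n k := by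
  obtain rfl | hk := k.eq_zero_or_pos
  · rw [probEq_partCount_zero hm]
    positivity
  · refine (probEq_le_binomialMoment_one _ hm).trans ?_
    refine (binomialMoment_partCount_one_le hn hk).trans ?_
    rw [coe_partMean, ← mul_div_assoc]
    gcongr
    exact mod_cast (by lia)

/- If the rate is at least `4 * m`, the mean is at distance at least half the rate from `m`, and
Chebyshev's inequality applies; otherwise bound the probability by `1`. -/
lemma partMean_mul_probEq_partCount_le :
    partMean n k * probEq (partCount n k) m ≤ 24 + 4 * m := by
  obtain rfl | hk := k.eq_zero_or_pos
  · rw [probEq_partCount_zero hm, mul_zero]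
    positivity
  set p := probEq (partCount n k) m
  set μ := binomialMoment (partCount n k) 1
  have hp0 : 0 ≤ p := probEq_nonneg _ m
  have hp1 : p ≤ 1 := probEq_le_one _ m
  have hm1 : (1 : ℝ) ≤ m := mod_cast Nat.one_le_iff_ne_zero.2 hm
  obtain hsmall | hlarge := le_or_gt (partMean n k : ℝ) (4 * m)
  · calc partMean n k * p ≤ 4 * m * 1 := by gcongr
      _ ≤ 24 + 4 * m := by linarith
  · have hμ_lower : partMean n k - 1 ≤ μ := sub_one_le_binomialMoment_partCount_one hn hk
    have hvariance : 2 * binomialMoment (partCount n k) 2 + μ - μ ^ 2 ≤ 6 * partMean n k := by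
      nlinarith [two_mul_binomialMoment_partCount_two_le hn hk]
    have hdeviation : (partMean n k / 2 : ℝ) ^ 2 ≤ (m - μ) ^ 2 := by
      rw [← neg_sub μ, neg_sq]
      exact pow_le_pow_left₀ (by positivity) (by linarith) 2
    have hchebyshev : p * (partMean n k / 2 : ℝ) ^ 2 ≤ 6 * partMean n k :=
      (mul_le_mul_of_nonneg_left hdeviation hp0).trans ((probEq_mul_sq_le _ m).trans hvariance)
    have hpos : (0 : ℝ) < partMean n k := by linarith
    have : partMean n k * p ≤ 24 := le_of_mul_le_mul_left (by linarith) hpos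
    linarith

lemma abs_probEq_sub_poisson_le_mul :
    |probEq (partCount n k) m - (poissonMeasure (partMean n k)).real {m}| ≤
      (24 + 4 * m) * partMean n k :=
  abs_sub_le_of_nonneg_of_le (probEq_nonneg _ m)
    ((probEq_partCount_le hn hm k).trans (by gcongr; linarith)) measureReal_nonneg
    ((poissonMeasure_real_singleton_le _ hm).trans
      (le_mul_of_one_le_left (partMean n k).coe_nonneg (by linarith)))

lemma partMean_mul_abs_probEq_sub_poisson_le :
    partMean n k * |probEq (partCount n k) m - (poissonMeasure (partMean n k)).real {m}| ≤
      24 + 4 * m := by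
  rw [← abs_of_nonneg (partMean n k).coe_nonneg, ← abs_mul, mul_sub]
  refine abs_sub_le_of_nonneg_of_le (mul_nonneg (partMean n k).coe_nonneg (probEq_nonneg _ m))
    (partMean_mul_probEq_partCount_le hn hm k)
    (mul_nonneg (partMean n k).coe_nonneg measureReal_nonneg) ?_
  exact (mul_poissonMeasure_real_singleton_le _ m).trans (by linarith)

end Domination

section DyadicScale

lemma partMean_le_zpow (n k : ℕ) : (partMean n k : ℝ) ≤ 2 ^ (Nat.log 2 n - k : ℤ) := by
  have hn : (n : ℝ) < 2 ^ (Nat.log 2 n + 1) := mod_cast Nat.lt_pow_succ_log_self one_lt_two n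
  rw [coe_partMean, div_le_iff₀ (by positivity), ← zpow_natCast, ← zpow_add₀ two_ne_zero]
  convert hn.le using 1
  rw [← zpow_natCast]
  congr 1
  lia

lemma zpow_le_two_mul_partMean {n : ℕ} (hn : n ≠ 0) (k : ℕ) :
    (2 : ℝ) ^ (Nat.log 2 n - k : ℤ) ≤ 2 * partMean n k := by
  have hn : (2 : ℝ) ^ Nat.log 2 n ≤ n := mod_cast Nat.pow_log_le_self 2 hn
  rw [coe_partMean, pow_succ', ← mul_div_assoc, mul_div_mul_left _ _ two_ne_zero,
    le_div_iff₀ (by positivity), ← zpow_natCast, ← zpow_add₀ two_ne_zero, sub_add_cancel,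
    zpow_natCast]
  exact hn

lemma abs_probEq_sub_poisson_le {n m : ℕ} (hn : n ≠ 0) (hm : m ≠ 0) (k : ℕ) :
    |probEq (partCount n k) m - (poissonMeasure (partMean n k)).real {m}| ≤
      2 * (24 + 4 * m) * (1 / 2) ^ ((k : ℤ) - Nat.log 2 n).natAbs := by
  set d := |probEq (partCount n k) m - (poissonMeasure (partMean n k)).real {m}|
  obtain h | h := le_total (Nat.log 2 n) k
  · have hscale : (2 : ℝ) ^ (Nat.log 2 n - k : ℤ) = (1 / 2) ^ ((k : ℤ) - Nat.log 2 n).natAbs := by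
      rw [one_div, inv_pow, ← zpow_natCast, ← zpow_neg]
      congr 1
      lia
    calc d ≤ (24 + 4 * m) * partMean n k := abs_probEq_sub_poisson_le_mul hn hm k
      _ ≤ 2 * (24 + 4 * m) * 2 ^ (Nat.log 2 n - k : ℤ) := by
          gcongr
          · linarith
          · exact partMean_le_zpow n k
      _ = _ := by rw [hscale]
  · have hscale : (2 : ℝ) ^ (Nat.log 2 n - k : ℤ) = 2 ^ ((k : ℤ) - Nat.log 2 n).natAbs := by
      rw [← zpow_natCast]
      congr 1
      lia
    rw [one_div_pow, mul_one_div, le_div_iff₀ (by positivity), ← hscale]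
    calc d * 2 ^ (Nat.log 2 n - k : ℤ) ≤ d * (2 * partMean n k) :=
          mul_le_mul_of_nonneg_left (zpow_le_two_mul_partMean hn k) (abs_nonneg _)
      _ = 2 * (partMean n k * d) := by ring
      _ ≤ 2 * (24 + 4 * m) := by
          gcongr
          exact partMean_mul_abs_probEq_sub_poisson_le hn hm k

lemma tendsto_natLog_two_atTop : Tendsto (Nat.log 2) atTop atTop :=
  tendsto_atTop_atTop_of_monotone (fun _ _ h => Nat.log_mono_right h) fun b =>
    ⟨2 ^ b, (Nat.log_pow one_lt_two b).ge⟩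

lemma tendsto_tsum_probEq_sub_poisson {m : ℕ} (hm : m ≠ 0) :
    Tendsto (fun n => ∑' k, (probEq (partCount n k) m -
      (poissonMeasure (partMean n k)).real {m})) atTop (𝓝 0) := by
  refine tendsto_tsum_of_natAbs_sub_bound tendsto_natLog_two_atTop (fun K j hK => ?_)
    ((eventually_ne_atTop 0).mono fun n hn => abs_probEq_sub_poisson_le hn hm)
  have hK_atTop : Tendsto K atTop atTop := by
    refine tendsto_atTop.2 fun b => ?_
    filter_upwards [hK, tendsto_natLog_two_atTop.eventually_ge_atTop (b + j.natAbs)] with n hn hb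
    lia
  refine tendsto_probEq_partCount_sub hK_atTop (B := 2 ^ (-j)) ?_ m
  filter_upwards [hK] with n hn
  have hj : (Nat.log 2 n - K n : ℤ) = -j := by lia
  exact hj ▸ partMean_le_zpow n (K n)

end DyadicScale

section MainTerm

lemma tsum_poisson_partMean (n : ℕ) :
    ∑' k, (poissonMeasure (partMean n k)).real {m} = (n : ℝ) ^ m / m ! *
      ∑' k : ℕ+, (1 / (2 : ℝ) ^ ((k : ℕ) * m)) * Real.exp (-(n : ℝ) / 2 ^ (k : ℕ)) := by
  rw [tsum_pnat_eq_tsum_succ (f := fun k => 1 / (2 : ℝ) ^ (k * m) * Real.exp (-(n : ℝ) / 2 ^ k)),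
    ← tsum_mul_left]
  refine tsum_congr fun k => ?_
  rw [poissonMeasure_real_singleton, coe_partMean, div_pow, ← pow_mul, neg_div]
  ring

variable {m : ℕ} (hm : m ≠ 0)
include hm

lemma hasSum_probEq_partCount (n : ℕ) :
    HasSum (fun k => probEq (partCount n k) m)
      ((∑ κ : Composition n, (#{j ∈ κ.blocks.toFinset | κ.blocks.count j = m} : ℝ)) /
        2 ^ (n - 1)) := by
  have hcard : (Fintype.card (Composition n) : ℝ) = 2 ^ (n - 1) := by simp [composition_card]
  simp only [probEq, Fintype.expect_eq_sum_div_card, hcard]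
  refine (hasSum_sum fun κ _ => ?_).div_const _
  rw [← sum_boole]
  refine hasSum_sum_of_ne_finset_zero fun k hk => if_neg fun h => hm ?_
  rw [← h, partCount, List.count_eq_zero]
  exact fun hk' => hk (List.mem_toFinset.2 hk')

lemma summable_poisson_partMean (n : ℕ) :
    Summable fun k => (poissonMeasure (partMean n k)).real {m} := by
  refine .of_nonneg_of_le (fun _ => measureReal_nonneg)
    (fun k => poissonMeasure_real_singleton_le _ hm) ?_
  refine (summable_geometric_two.mul_left (n / 2 : ℝ)).congr fun k => ?_
  rw [coe_partMean, one_div_pow]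
  field_simp
  ring

lemma exp_neg_two_div_factorial_le_tsum_poisson {n : ℕ} (hn : 2 ≤ n) :
    Real.exp (-2) / m ! ≤ ∑' k, (poissonMeasure (partMean n k)).real {m} := by
  set L := Nat.log 2 n
  have hL : 1 ≤ L := Nat.log_pos one_lt_two hn
  have hscale : (L - (L - 1 : ℕ) : ℤ) = 1 := by lia
  have hupper : (partMean n (L - 1) : ℝ) ≤ 2 := by
    have h := partMean_le_zpow n (L - 1)
    rwa [hscale, zpow_one] at h
  have hlower : 1 ≤ (partMean n (L - 1) : ℝ) := by
    have h := zpow_le_two_mul_partMean (by lia : n ≠ 0) (L - 1)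
    rw [hscale, zpow_one] at h
    linarith
  calc Real.exp (-2) / m ! ≤ (poissonMeasure (partMean n (L - 1))).real {m} := by
        rw [poissonMeasure_real_singleton]
        gcongr
        refine (Real.exp_le_exp.2 (neg_le_neg hupper)).trans ?_
        exact le_mul_of_one_le_right (Real.exp_nonneg _) (one_le_pow₀ hlower)
    _ ≤ ∑' k, (poissonMeasure (partMean n k)).real {m} :=
        (summable_poisson_partMean hm n).le_tsum (L - 1) fun _ _ => measureReal_nonneg

lemma isEquivalent_tsum_probEq_tsum_poisson :
    Asymptotics.IsEquivalent atTop (fun n => ∑' k, probEq (partCount n k) m)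
      fun n => ∑' k, (poissonMeasure (partMean n k)).real {m} := by
  have hdiff : (fun n => ∑' k, probEq (partCount n k) m -
      ∑' k, (poissonMeasure (partMean n k)).real {m}) =o[atTop] fun _ => (1 : ℝ) := by
    refine (Asymptotics.isLittleO_one_iff ℝ).2 ((tendsto_tsum_probEq_sub_poisson hm).congr ?_)
    exact fun n => (hasSum_probEq_partCount hm n).summable.tsum_sub (summable_poisson_partMean hm n)
  refine hdiff.trans_isBigO (.of_bound (Real.exp (-2) / m !)⁻¹ ?_)
  filter_upwards [eventually_ge_atTop 2] with n hn
  rw [norm_one, inv_mul_eq_div, one_le_div (by positivity)]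
  exact (exp_neg_two_div_factorial_le_tsum_poisson hm hn).trans (le_abs_self _)

end MainTerm

/-- **Lemma 5.** For fixed `m ≥ 1`, the expected number of part sizes of multiplicity `m` in
a uniformly random composition of `n` satisfies
`E(|M_m|) = (1 + o(1)) (n^m/m!) Σ_{k≥1} 2^{-km} exp(−n/2^k)` as `n → ∞`. -/
theorem expected_number_multiplicity_m (m : ℕ) (hm : 1 ≤ m) :
    ∃ ε : ℕ → ℝ, Tendsto ε atTop (nhds 0) ∧
      ∀ᶠ n : ℕ in atTop,
        (∑ κ : Composition n,
            ((κ.blocks.toFinset.filter fun j => κ.blocks.count j = m).card : ℝ)) / 2 ^ (n - 1) =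
          (1 + ε n) *
            (((n : ℝ) ^ m / m.factorial) *
              ∑' k : ℕ+, (1 / (2 : ℝ) ^ ((k : ℕ) * m)) * Real.exp (-(n : ℝ) / 2 ^ (k : ℕ))) := by
  have hm0 : m ≠ 0 := Nat.one_le_iff_ne_zero.1 hm
  obtain ⟨ψ, hψ, hmul⟩ := (isEquivalent_tsum_probEq_tsum_poisson hm0).exists_eq_mul
  refine ⟨fun n => ψ n - 1, by simpa using hψ.sub_const 1, ?_⟩
  filter_upwards [hmul] with n hn
  rw [← (hasSum_probEq_partCount hm0 n).tsum_eq, ← tsum_poisson_partMean, add_sub_cancel]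
  exact hn
end

section
/- Fix an integer m ≥ 1 and set σ = m − 1/2. For every real number x > 0, Σ_{k=1}^∞ 2^{-km} exp(−x/2^k) = (1/2π) ∫_{-∞}^{∞} x^{-(σ+it)} Γ(σ+it) / (2^{m−σ−it} − 1) dt, where the integral is the absolutely convergent Lebesgue integral over the vertical line Re z = σ and Γ is the complex gamma function. -/
open MeasureTheory Complex

/-! Expanding `1 / (a ^ (α - s) - 1)` on the line `re s = σ < re α` as the geometric series
`∑ k ≥ 1, a ^ (k * (s - α))` and integrating term by term turns each factor `a ^ (k * s)` into the
dilation `x ↦ x / a ^ k` of the inverse Mellin transform. For `Γ` that transform is `exp (-x)`, by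
Mellin inversion, which applies because the functional equation makes `Γ` decay quadratically on
vertical lines. -/

section Geometric

lemma hasSum_geometric_pnat {𝕜 : Type*} [NormedField 𝕜] {w : 𝕜} (hw : ‖w‖ < 1) :
    HasSum (fun k : ℕ+ ↦ w ^ (k : ℕ)) (w / (1 - w)) := by
  have hw1 : 1 - w ≠ 0 := sub_ne_zero.2 (by rintro rfl; simp at hw)
  rw [hasSum_pnat_iff (f := fun k : ℕ ↦ w ^ k), pow_zero, div_add_one hw1, add_sub_cancel, one_div]
  exact hasSum_geometric_of_norm_lt_one hw

variable {X 𝕜 E : Type*} [MeasurableSpace X] {μ : Measure X} [NormedField 𝕜]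
  [NormedAddCommGroup E] [NormedSpace 𝕜 E] {w : X → 𝕜} {G : X → E} {r : ℝ}

lemma integrable_pow_smul (hw : AEStronglyMeasurable w μ) (hwr : ∀ᵐ t ∂μ, ‖w t‖ ≤ r)
    (hG : Integrable G μ) (k : ℕ) : Integrable (fun t ↦ w t ^ k • G t) μ :=
  hG.bdd_smul (r ^ k) (hw.pow k) <| hwr.mono fun t ht ↦ by
    simpa only [Pi.pow_apply, norm_pow] using pow_le_pow_left₀ (norm_nonneg _) ht k

lemma integrable_div_one_sub_smul (hw : AEStronglyMeasurable w μ) (hwr : ∀ᵐ t ∂μ, ‖w t‖ ≤ r)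
    (hr : r < 1) (hG : Integrable G μ) : Integrable (fun t ↦ (w t / (1 - w t)) • G t) μ := by
  have hmeas : AEStronglyMeasurable (fun t ↦ w t / (1 - w t)) μ :=
    hw.div₀ (aestronglyMeasurable_const.sub hw)
  refine hG.bdd_smul (r / (1 - r)) hmeas (hwr.mono fun t ht ↦ ?_)
  have hsub : 1 - r ≤ ‖1 - w t‖ := by
    have := norm_sub_norm_le 1 (w t)
    rw [norm_one] at this
    linarith
  rw [norm_div]
  exact div_le_div₀ ((norm_nonneg _).trans ht) ht (sub_pos.2 hr) hsub

lemma hasSum_integral_pow_smul [NormedSpace ℝ E] (hw : AEStronglyMeasurable w μ)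
    (hwr : ∀ᵐ t ∂μ, ‖w t‖ ≤ r) (hr : r < 1) (hG : Integrable G μ) :
    HasSum (fun k : ℕ+ ↦ ∫ t, w t ^ (k : ℕ) • G t ∂μ) (∫ t, (w t / (1 - w t)) • G t ∂μ) := by
  obtain rfl | _ := eq_zero_or_neZero μ
  · simp
  have hr₀ : 0 ≤ r := hwr.exists.elim fun t ht ↦ (norm_nonneg _).trans ht
  have hint (k : ℕ) : Integrable (fun t ↦ w t ^ k • G t) μ := integrable_pow_smul hw hwr hG k
  have hbound (k : ℕ) : ∫ t, ‖w t ^ k • G t‖ ∂μ ≤ r ^ k * ∫ t, ‖G t‖ ∂μ := by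
    rw [← integral_const_mul]
    refine integral_mono_ae (hint k).norm (hG.norm.const_mul _) (hwr.mono fun t ht ↦ ?_)
    simp only [norm_smul, norm_pow]
    gcongr
  have hsummable : Summable fun k : ℕ+ ↦ ∫ t, ‖w t ^ (k : ℕ) • G t‖ ∂μ := by
    refine .of_nonneg_of_le (fun k ↦ by positivity) (fun k ↦ hbound k) ?_
    refine Summable.mul_right _ (hasSum_geometric_pnat (w := r) ?_).summable
    rwa [Real.norm_of_nonneg hr₀]
  convert hasSum_integral_of_summable_integral_norm (fun k : ℕ+ ↦ hint k) hsummable using 1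
  refine integral_congr_ae (hwr.mono fun t ht ↦ ?_)
  exact ((hasSum_geometric_pnat (ht.trans_lt hr)).smul_const (G t)).tsum_eq.symm

end Geometric

section MellinInv

lemma ofReal_pow_cpow {a : ℝ} (ha : 0 ≤ a) (k : ℕ) (s : ℂ) :
    ((a ^ k : ℝ) : ℂ) ^ s = ((a : ℂ) ^ s) ^ k := by
  have harg : (a : ℂ).arg = 0 := arg_ofReal_of_nonneg ha
  rw [ofReal_pow, ← cpow_nat_mul' (by simp [harg, Real.pi_pos]) (by simp [harg, Real.pi_nonneg]),
    cpow_nat_mul]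

variable {E : Type*} [NormedAddCommGroup E] [NormedSpace ℂ E] {F : ℂ → E} {a x σ : ℝ} {α : ℂ}

lemma integrable_cpow_smul_of_verticalIntegrable (hF : VerticalIntegrable F σ) (hx : 0 < x) :
    Integrable fun t : ℝ ↦ (x : ℂ) ^ (-((σ : ℂ) + t * I)) • F (σ + t * I) := by
  have hcont : Continuous fun t : ℝ ↦ (x : ℂ) ^ (-((σ : ℂ) + t * I)) :=
    Continuous.const_cpow (by fun_prop) (Or.inl (ofReal_ne_zero.2 hx.ne'))
  refine Integrable.bdd_smul hF (x ^ (-σ)) hcont.aestronglyMeasurable (.of_forall fun t ↦ ?_)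
  simp [norm_cpow_eq_rpow_re_of_pos hx]

lemma mellinInv_div (hx : 0 ≤ x) (ha : 0 ≤ a) :
    mellinInv σ F (x / a) = mellinInv σ (fun s ↦ (a : ℂ) ^ s • F s) x := by
  simp only [mellinInv, ofReal_div, div_cpow_ofReal_nonneg hx ha, cpow_neg (a : ℂ), div_inv_eq_mul,
    mul_smul]

lemma mellinInv_const_smul (c : ℂ) :
    mellinInv σ (fun s ↦ c • F s) x = c • mellinInv σ F x := by
  simp only [mellinInv, smul_comm _ c, integral_smul]

lemma mellinInv_cpow_sub_pow_smul (ha : 0 < a) (hx : 0 ≤ x) (k : ℕ) :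
    mellinInv σ (fun s ↦ ((a : ℂ) ^ (s - α)) ^ k • F s) x =
      (a : ℂ) ^ (-(k * α)) • mellinInv σ F (x / a ^ k) := by
  rw [mellinInv_div hx (pow_nonneg ha.le k), ← mellinInv_const_smul]
  congr 1 with s
  rw [smul_smul, ofReal_pow_cpow ha.le, cpow_sub _ _ (ofReal_ne_zero.2 ha.ne'), cpow_neg,
    cpow_nat_mul, div_pow, div_eq_inv_mul]

lemma cpow_sub_div_one_sub (ha : 0 < a) (s : ℂ) :
    (a : ℂ) ^ (s - α) / (1 - (a : ℂ) ^ (s - α)) = ((a : ℂ) ^ (α - s) - 1)⁻¹ := by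
  have hne : (a : ℂ) ^ (α - s) ≠ 0 := by simp [cpow_eq_zero_iff, ha.ne']
  rw [← neg_sub α s, cpow_neg]
  field_simp

lemma norm_cpow_vertical_sub (ha : 0 < a) (t : ℝ) :
    ‖(a : ℂ) ^ ((σ : ℂ) + t * I - α)‖ = a ^ (σ - α.re) := by
  simp [norm_cpow_eq_rpow_re_of_pos ha]

lemma continuous_cpow_vertical_sub (ha : 0 < a) :
    Continuous fun t : ℝ ↦ (a : ℂ) ^ ((σ : ℂ) + t * I - α) :=
  Continuous.const_cpow (by fun_prop) (Or.inl (ofReal_ne_zero.2 ha.ne'))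

lemma verticalIntegrable_inv_cpow_sub_one_smul (ha : 1 < a) (hσ : σ < α.re)
    (hF : VerticalIntegrable F σ) :
    VerticalIntegrable (fun s ↦ ((a : ℂ) ^ (α - s) - 1)⁻¹ • F s) σ := by
  have ha₀ : 0 < a := one_pos.trans ha
  simp only [VerticalIntegrable, ← cpow_sub_div_one_sub ha₀]
  exact integrable_div_one_sub_smul (continuous_cpow_vertical_sub ha₀).aestronglyMeasurable
    (.of_forall fun t ↦ (norm_cpow_vertical_sub ha₀ t).le)
    (Real.rpow_lt_one_of_one_lt_of_neg ha (sub_neg.2 hσ)) hF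

lemma hasSum_mellinInv_div_pow (ha : 1 < a) (hσ : σ < α.re) (hF : VerticalIntegrable F σ)
    (hx : 0 < x) :
    HasSum (fun k : ℕ+ ↦ (a : ℂ) ^ (-(k * α)) • mellinInv σ F (x / a ^ (k : ℕ)))
      (mellinInv σ (fun s ↦ ((a : ℂ) ^ (α - s) - 1)⁻¹ • F s) x) := by
  have ha₀ : 0 < a := one_pos.trans ha
  have hsum := (hasSum_integral_pow_smul
    (continuous_cpow_vertical_sub (σ := σ) (α := α) ha₀).aestronglyMeasurable
    (.of_forall fun t ↦ (norm_cpow_vertical_sub ha₀ t).le)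
    (Real.rpow_lt_one_of_one_lt_of_neg ha (sub_neg.2 hσ))
    (integrable_cpow_smul_of_verticalIntegrable hF hx)).const_smul (1 / (2 * Real.pi))
  simp only [← mellinInv_cpow_sub_pow_smul ha₀ hx.le, ← cpow_sub_div_one_sub ha₀]
  simpa only [mellinInv, smul_smul, mul_comm] using hsum

end MellinInv

section GammaFunction

variable {s : ℂ} {σ x : ℝ}

lemma norm_Gamma_le_Gamma_re (hs : 0 < s.re) : ‖Gamma s‖ ≤ Real.Gamma s.re := by
  rw [Gamma_eq_integral hs, Real.Gamma_eq_integral hs, GammaIntegral]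
  refine (norm_integral_le_integral_norm _).trans_eq ?_
  refine setIntegral_congr_fun measurableSet_Ioi fun t ht ↦ ?_
  rw [norm_mul, norm_real, Real.norm_of_nonneg (Real.exp_pos _).le,
    norm_cpow_eq_rpow_re_of_pos ht, sub_re, one_re]

lemma norm_Gamma_le_Gamma_re_add_two_div (hs : 0 < s.re) :
    ‖Gamma s‖ ≤ Real.Gamma (s.re + 2) / ‖s‖ ^ 2 := by
  have hs0 : s ≠ 0 := by rintro rfl; simp at hs
  have hs1 : s + 1 ≠ 0 := fun h ↦ by
    have hre : s.re + 1 = 0 := by simpa using congrArg re h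
    linarith
  have hrec : Gamma (s + 2) = (s + 1) * (s * Gamma s) := by
    rw [← one_add_one_eq_two, ← add_assoc, Gamma_add_one _ hs1, Gamma_add_one _ hs0]
  have hnorm : ‖s‖ ≤ ‖s + 1‖ := by
    rw [norm_def, norm_def]
    apply Real.sqrt_le_sqrt
    simp only [normSq_apply, add_re, one_re, add_im, one_im]
    nlinarith
  rw [le_div_iff₀ (by positivity)]
  calc ‖Gamma s‖ * ‖s‖ ^ 2 = ‖s‖ * (‖s‖ * ‖Gamma s‖) := by ring
    _ ≤ ‖s + 1‖ * (‖s‖ * ‖Gamma s‖) := by gcongr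
    _ = ‖Gamma (s + 2)‖ := by rw [hrec, norm_mul, norm_mul]
    _ ≤ Real.Gamma (s.re + 2) := by
      simpa using norm_Gamma_le_Gamma_re (s := s + 2) (by simp; linarith)

lemma integrable_inv_sq_add_sq {c : ℝ} (hc : c ≠ 0) : Integrable fun t : ℝ ↦ (c ^ 2 + t ^ 2)⁻¹ := by
  refine ((integrable_inv_one_add_sq.comp_div hc).const_mul (c ^ 2)⁻¹).congr (.of_forall fun t ↦ ?_)
  field_simp

lemma continuous_Gamma_vertical (hσ : 0 < σ) : Continuous fun t : ℝ ↦ Gamma (σ + t * I) := by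
  refine continuous_iff_continuousAt.2 fun t ↦ ?_
  have hGamma : ContinuousAt Gamma (σ + t * I) :=
    (differentiableAt_Gamma _ fun n h ↦ by
      have hre : σ = -n := by simpa using congrArg re h
      linarith [n.cast_nonneg (α := ℝ)]).continuousAt
  exact hGamma.comp (f := fun t : ℝ ↦ (σ : ℂ) + t * I) (by fun_prop)

lemma verticalIntegrable_Gamma (hσ : 0 < σ) : VerticalIntegrable Gamma σ := by
  refine ((integrable_inv_sq_add_sq hσ.ne').const_mul (Real.Gamma (σ + 2))).mono'
    (continuous_Gamma_vertical hσ).aestronglyMeasurable (.of_forall fun t ↦ ?_)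
  simpa [Complex.sq_norm, normSq_add_mul_I, div_eq_mul_inv] using
    norm_Gamma_le_Gamma_re_add_two_div (s := σ + t * I) (by simpa using hσ)

lemma mellin_exp_neg (hs : 0 < s.re) :
    mellin (fun x : ℝ ↦ (Real.exp (-x) : ℂ)) s = Gamma s := by
  rw [← GammaIntegral_eq_mellin, Gamma_eq_integral hs]

lemma mellinConvergent_exp_neg (hs : 0 < s.re) :
    MellinConvergent (fun x : ℝ ↦ (Real.exp (-x) : ℂ)) s := by
  simpa [MellinConvergent, mul_comm] using GammaIntegral_convergent hs

lemma mellinInv_Gamma (hσ : 0 < σ) (hx : 0 < x) : mellinInv σ Gamma x = Real.exp (-x) := by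
  have hline (t : ℝ) : mellin (fun x : ℝ ↦ (Real.exp (-x) : ℂ)) (σ + t * I) = Gamma (σ + t * I) :=
    mellin_exp_neg (by simpa using hσ)
  have hvert : VerticalIntegrable (mellin fun x : ℝ ↦ (Real.exp (-x) : ℂ)) σ := by
    simpa only [VerticalIntegrable, hline] using verticalIntegrable_Gamma hσ
  rw [← mellinInv_mellin_eq σ _ hx (mellinConvergent_exp_neg (by simpa using hσ)) hvert
    (by fun_prop)]
  simp only [mellinInv, hline]

end GammaFunction

theorem mellin_representation_sum_general {a σ x : ℝ} {α : ℂ} (ha : 1 < a) (hσ : 0 < σ)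
    (hσα : σ < α.re) (hx : 0 < x) :
    Integrable (fun t : ℝ ↦
      (x : ℂ) ^ (-((σ : ℂ) + t * I)) * Gamma (σ + t * I) / ((a : ℂ) ^ (α - σ - t * I) - 1)) ∧
    HasSum (fun k : ℕ+ ↦ (a : ℂ) ^ (-(k * α)) * Real.exp (-x / a ^ (k : ℕ)))
      ((1 / (2 * Real.pi)) * ∫ t : ℝ,
        (x : ℂ) ^ (-((σ : ℂ) + t * I)) * Gamma (σ + t * I) / ((a : ℂ) ^ (α - σ - t * I) - 1)) := by
  have hΓ := verticalIntegrable_Gamma hσ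
  have hint := integrable_cpow_smul_of_verticalIntegrable
    (verticalIntegrable_inv_cpow_sub_one_smul ha hσα hΓ) hx
  have hsum := hasSum_mellinInv_div_pow ha hσα hΓ hx
  have hintegrand (t : ℝ) :
      (x : ℂ) ^ (-((σ : ℂ) + t * I)) * Gamma (σ + t * I) / ((a : ℂ) ^ (α - σ - t * I) - 1) =
        (x : ℂ) ^ (-((σ : ℂ) + t * I)) •
          ((a : ℂ) ^ (α - (σ + t * I)) - 1)⁻¹ • Gamma (σ + t * I) := by
    rw [sub_sub, smul_eq_mul, smul_eq_mul, div_eq_mul_inv]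
    ring
  have hexp (k : ℕ+) : mellinInv σ Gamma (x / a ^ (k : ℕ)) = Real.exp (-x / a ^ (k : ℕ)) := by
    rw [neg_div]
    exact mellinInv_Gamma hσ (by positivity)
  simp only [hexp] at hsum
  simp only [hintegrand]
  exact ⟨hint, by simpa [mellinInv] using hsum⟩

/-- **Mellin representation.** For `m ≥ 1`, `σ = m − 1/2`, and real `x > 0`,
`Σ_{k≥1} 2^{-km} exp(−x/2^k) = (1/2π) ∫_{-∞}^{∞} x^{-(σ+it)} Γ(σ+it)/(2^{m−σ−it} − 1) dt`,
the integral being absolutely convergent. -/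
theorem mellin_representation_sum (m : ℕ) (hm : 1 ≤ m) (x : ℝ) (hx : 0 < x) :
    Integrable (fun t : ℝ =>
      (x : ℂ) ^ (-(((m : ℂ) - 1 / 2) + t * I)) * Complex.Gamma (((m : ℂ) - 1 / 2) + t * I) /
        ((2 : ℂ) ^ ((m : ℂ) - ((m : ℂ) - 1 / 2) - t * I) - 1)) ∧
    ((∑' k : ℕ+, (1 / (2 : ℝ) ^ ((k : ℕ) * m)) * Real.exp (-x / 2 ^ (k : ℕ)) : ℝ) : ℂ) =
      (1 / (2 * Real.pi)) *
        ∫ t : ℝ,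
          (x : ℂ) ^ (-(((m : ℂ) - 1 / 2) + t * I)) * Complex.Gamma (((m : ℂ) - 1 / 2) + t * I) /
            ((2 : ℂ) ^ ((m : ℂ) - ((m : ℂ) - 1 / 2) - t * I) - 1) := by
  obtain ⟨hint, hsum⟩ := mellin_representation_sum_general (a := 2) (α := m) (σ := m - 1 / 2)
    one_lt_two (by linarith [Nat.one_le_cast (α := ℝ).2 hm]) (by simp) hx
  push_cast at hint hsum
  exact ⟨hint, by simpa [cpow_neg, cpow_nat_mul, pow_mul', ofReal_tsum] using hsum.tsum_eq⟩
end
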